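/- Let G(x,v,t) be the kinetic Fokker–Planck fundamental solution on ℝ³×ℝ³. Then for every p ∈ [1,∞] and j ∈ ℕ₀ there is a constant C_p such that ‖|x|^j ∇_v G(·,·,t)‖_{p,1} ≤ C_p·t^{(−10p+3jp+9)/(2p)} and ‖|x|^j ∇_x G(·,·,t)‖_{p,1} ≤ C_p·t^{(−12p+3jp+9)/(2p)}, where ‖f‖_{p,q} = (∫(∫|f(x,v)|^q dv)^{p/q} dx)^{1/p}. -/

import Mathlib

open MeasureTheory Real
open scoped ENNReal

noncomputable section

local notation "E3" => EuclideanSpace ℝ (Fin 3)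

/-- The Gaussian `exp (-b ‖x‖²)` is integrable for `b > 0`. -/
theorem integrable_gaussian_norm {b : ℝ} (hb : 0 < b) :
    Integrable (fun x : E3 => Real.exp (-b * ‖x‖ ^ 2)) := by
  by_contra h
  have h1 := GaussianFourier.integral_rexp_neg_mul_sq_norm (V := E3) hb
  rw [integral_undef h] at h1
  have : 0 < (π / b) ^ (Module.finrank ℝ E3 / 2 : ℝ) := by positivity
  linarith

theorem integral_gaussian_norm_scaled {b t : ℝ} (hb : 0 < b) (ht : 0 < t) (k : ℕ) :
    ∫ x : E3, Real.exp (-(b / t ^ k) * ‖x‖ ^ 2)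
      = (π / b) ^ (3 / 2 : ℝ) * t ^ (3 * k / 2 : ℝ) := by
  rw [GaussianFourier.integral_rexp_neg_mul_sq_norm (by positivity)]
  have h : π / (b / t ^ k) = (π / b) * t ^ (k : ℝ) := by
    rw [Real.rpow_natCast]; field_simp
  rw [h, Real.mul_rpow (by positivity) (by positivity), ← Real.rpow_mul ht.le]
  simp only [finrank_euclideanSpace, Fintype.card_fin]
  congr 2
  push_cast
  ring

/-- Scaling of the `L^p` norms of a Gaussian on `ℝ³` of width `t ^ (3/2)`; for `p = ∞` the
exponent `9 / 2 / p.toReal` vanishes. -/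
theorem exists_eLpNorm_gaussian_le (p : ℝ≥0∞) (hp : 1 ≤ p) {b : ℝ} (hb : 0 < b) :
    ∃ K > 0, ∀ t : ℝ, 0 < t →
      eLpNorm (fun x : E3 => Real.exp (-(b / t ^ 3) * ‖x‖ ^ 2)) p volume
        ≤ ENNReal.ofReal (K * t ^ (9 / 2 / p.toReal)) := by
  rcases eq_or_ne p ⊤ with rfl | hp'
  · refine ⟨1, one_pos, fun t ht => ?_⟩
    rw [eLpNorm_exponent_top]
    simp only [ENNReal.toReal_top, div_zero, Real.rpow_zero, mul_one]
    refine eLpNormEssSup_le_of_ae_bound (Filter.Eventually.of_forall fun x => ?_)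
    rw [Real.norm_eq_abs, Real.abs_exp, Real.exp_le_one_iff, neg_mul, neg_nonpos]
    positivity
  · have hp0 : p ≠ 0 := (zero_lt_one.trans_le hp).ne'
    have hr : 0 < p.toReal := ENNReal.toReal_pos hp0 hp'
    refine ⟨((π / (p.toReal * b)) ^ (3 / 2 : ℝ)) ^ (1 / p.toReal), by positivity,
      fun t ht => ?_⟩
    rw [eLpNorm_eq_lintegral_rpow_enorm_toReal hp0 hp']
    have h (x : E3) : ‖Real.exp (-(b / t ^ 3) * ‖x‖ ^ 2)‖ₑ ^ p.toReal
        = ENNReal.ofReal (Real.exp (-(p.toReal * b / t ^ 3) * ‖x‖ ^ 2)) := by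
      rw [Real.enorm_of_nonneg (Real.exp_pos _).le,
        ENNReal.ofReal_rpow_of_nonneg (Real.exp_pos _).le hr.le, ← Real.exp_mul]
      congr 2
      ring
    simp only [h]
    rw [← ofReal_integral_eq_lintegral_ofReal (integrable_gaussian_norm (by positivity))
        (Filter.Eventually.of_forall fun x => (Real.exp_pos _).le),
      integral_gaussian_norm_scaled (by positivity) ht,
      ENNReal.ofReal_rpow_of_nonneg (by positivity) (by positivity),
      Real.mul_rpow (by positivity) (by positivity), ← Real.rpow_mul ht.le]
    apply le_of_eq
    congr 3
    push_cast
    ring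

/-- A power is dominated by a Gaussian growth. -/
theorem pow_le_mul_exp_sq (j : ℕ) (y : ℝ) :
    y ^ j ≤ (1 + 32 ^ j * j.factorial) * Real.exp (y ^ 2 / 32) := by
  have h1 : (y ^ 2 / 32) ^ j / j.factorial ≤ Real.exp (y ^ 2 / 32) :=
    Real.pow_div_factorial_le_exp _ (by positivity) j
  have h2 : 1 ≤ Real.exp (y ^ 2 / 32) := Real.one_le_exp (by positivity)
  rw [div_pow, ← pow_mul, mul_comm 2 j, pow_mul, div_div, div_le_iff₀ (by positivity)] at h1
  nlinarith [sq_nonneg (y ^ j - 1), sq_nonneg (y ^ j)]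

/-- Mixed-norm bound, with weight `‖x‖ ^ j`, for a function under a Gaussian envelope
adapted to the kinetic scaling `x ∼ t ^ (3/2)`, `v ∼ t ^ (1/2)`. -/
theorem exists_eLpNorm_integral_le_of_gaussian_envelope
    (p : ℝ≥0∞) (hp : 1 ≤ p) (j : ℕ) {A : ℝ} (hA : 0 < A) (a : ℝ)
    (f : E3 → E3 → ℝ → ℝ) (hf0 : ∀ x v t, 0 ≤ f x v t)
    (hf : ∀ x v t, 0 < t → f x v t ≤ A * t ^ a *
      (Real.exp (-(1 / 16 / t ^ 3) * ‖x‖ ^ 2) * Real.exp (-(1 / 16 / t ^ 1) * ‖v‖ ^ 2))) :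
    ∃ K > 0, ∀ t : ℝ, 0 < t →
      eLpNorm (fun x : E3 => ∫ v : E3, ‖x‖ ^ j * f x v t) p volume
        ≤ ENNReal.ofReal (K * t ^ (a + 3 / 2 + 3 * j / 2 + 9 / 2 / p.toReal)) := by
  obtain ⟨K, hK, hKt⟩ := exists_eLpNorm_gaussian_le p hp (b := 1 / 32) (by norm_num)
  set B : ℝ := 1 + 32 ^ j * j.factorial with hB
  set D : ℝ := (π / (1 / 16)) ^ (3 / 2 : ℝ) with hD
  have hBpos : 0 < B := by positivity
  have hDpos : 0 < D := by positivity
  refine ⟨A * B * D * K, by positivity, fun t ht => ?_⟩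
  have hweight (x : E3) : ‖x‖ ^ j * Real.exp (-(1 / 16 / t ^ 3) * ‖x‖ ^ 2)
      ≤ B * t ^ (3 * j / 2 : ℝ) * Real.exp (-(1 / 32 / t ^ 3) * ‖x‖ ^ 2) := by
    have hs : (t ^ (3 / 2 : ℝ)) ^ 2 = t ^ 3 := by
      rw [← Real.rpow_natCast, ← Real.rpow_mul ht.le, ← Real.rpow_natCast]; norm_num
    have hsj : (t ^ (3 / 2 : ℝ)) ^ j = t ^ (3 * j / 2 : ℝ) := by
      rw [← Real.rpow_natCast, ← Real.rpow_mul ht.le]; congr 1; ring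
    have hy := pow_le_mul_exp_sq j (‖x‖ / t ^ (3 / 2 : ℝ))
    rw [div_pow, div_pow, hs, hsj, div_le_iff₀ (by positivity)] at hy
    calc ‖x‖ ^ j * Real.exp (-(1 / 16 / t ^ 3) * ‖x‖ ^ 2)
        ≤ B * Real.exp (‖x‖ ^ 2 / t ^ 3 / 32) * t ^ (3 * j / 2 : ℝ)
            * Real.exp (-(1 / 16 / t ^ 3) * ‖x‖ ^ 2) := by gcongr
      _ = B * t ^ (3 * j / 2 : ℝ) * (Real.exp (‖x‖ ^ 2 / t ^ 3 / 32)
            * Real.exp (-(1 / 16 / t ^ 3) * ‖x‖ ^ 2)) := by ring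
      _ = _ := by
        rw [← Real.exp_add]
        congr 2
        ring
  have hpt (x : E3) : ‖∫ v : E3, ‖x‖ ^ j * f x v t‖ ≤
      (A * B * D * t ^ (a + 3 / 2 + 3 * j / 2)) *
        Real.exp (-(1 / 32 / t ^ 3) * ‖x‖ ^ 2) := by
    rw [Real.norm_of_nonneg
      (integral_nonneg fun v => mul_nonneg (by positivity) (hf0 x v t))]
    calc ∫ v : E3, ‖x‖ ^ j * f x v t
        ≤ ∫ v : E3, (A * t ^ a * (B * t ^ (3 * j / 2 : ℝ) *
            Real.exp (-(1 / 32 / t ^ 3) * ‖x‖ ^ 2))) *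
            Real.exp (-(1 / 16 / t ^ 1) * ‖v‖ ^ 2) := by
          refine integral_mono_of_nonneg
            (Filter.Eventually.of_forall fun v => mul_nonneg (by positivity) (hf0 x v t))
            ((integrable_gaussian_norm (by positivity)).const_mul _)
            (Filter.Eventually.of_forall fun v => ?_)
          calc ‖x‖ ^ j * f x v t ≤ ‖x‖ ^ j * (A * t ^ a *
                (Real.exp (-(1 / 16 / t ^ 3) * ‖x‖ ^ 2) *
                  Real.exp (-(1 / 16 / t ^ 1) * ‖v‖ ^ 2))) := by
                gcongr
                exact hf x v t ht
            _ = A * t ^ a * (‖x‖ ^ j * Real.exp (-(1 / 16 / t ^ 3) * ‖x‖ ^ 2)) *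
                  Real.exp (-(1 / 16 / t ^ 1) * ‖v‖ ^ 2) := by ring
            _ ≤ _ := by
                exact mul_le_mul_of_nonneg_right
                  (mul_le_mul_of_nonneg_left (hweight x) (by positivity)) (Real.exp_pos _).le
      _ = _ := by
          rw [integral_const_mul, integral_gaussian_norm_scaled (by norm_num) ht,
            Real.rpow_add ht, Real.rpow_add ht, ← hD]
          norm_num
          ring
  calc eLpNorm (fun x : E3 => ∫ v : E3, ‖x‖ ^ j * f x v t) p volume
      ≤ eLpNorm ((A * B * D * t ^ (a + 3 / 2 + 3 * j / 2)) •
          fun x : E3 => Real.exp (-(1 / 32 / t ^ 3) * ‖x‖ ^ 2)) p volume :=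
        eLpNorm_mono_real hpt
    _ ≤ ENNReal.ofReal (A * B * D * t ^ (a + 3 / 2 + 3 * j / 2)) *
          ENNReal.ofReal (K * t ^ (9 / 2 / p.toReal)) := by
        rw [eLpNorm_const_smul, Real.enorm_of_nonneg (by positivity)]
        gcongr
        exact hKt t ht
    _ = _ := by
        rw [← ENNReal.ofReal_mul (by positivity), Real.rpow_add ht _ (9 / 2 / p.toReal)]
        congr 1
        ring

/-- The exponent of the kernel controls the Gaussian envelope together with one linear factor. -/
theorem kernel_exponent_envelope {t : ℝ} (ht : 0 < t) (x v : E3) :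
    (‖v‖ / (2 * t) + 3 * ‖x - (t / 2) • v‖ / t ^ 2) *
        Real.exp (-‖v‖ ^ 2 / (4 * t) - 3 * ‖x - (t / 2) • v‖ ^ 2 / t ^ 3)
      ≤ 4 * t ^ (-(1 / 2) : ℝ) * (Real.exp (-(1 / 16 / t ^ 3) * ‖x‖ ^ 2) *
          Real.exp (-(1 / 16 / t ^ 1) * ‖v‖ ^ 2)) ∧
    (6 * ‖x - (t / 2) • v‖ / t ^ 3) *
        Real.exp (-‖v‖ ^ 2 / (4 * t) - 3 * ‖x - (t / 2) • v‖ ^ 2 / t ^ 3)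
      ≤ 4 * t ^ (-(3 / 2) : ℝ) * (Real.exp (-(1 / 16 / t ^ 3) * ‖x‖ ^ 2) *
          Real.exp (-(1 / 16 / t ^ 1) * ‖v‖ ^ 2)) := by
  obtain ⟨s, hs, rfl⟩ : ∃ s : ℝ, 0 < s ∧ t = s ^ 2 :=
    ⟨√t, Real.sqrt_pos.2 ht, (Real.sq_sqrt ht.le).symm⟩
  have e1 : (s ^ 2) ^ (-(1 / 2) : ℝ) = s⁻¹ := by
    rw [← Real.rpow_natCast, ← Real.rpow_mul hs.le, ← Real.rpow_neg_one]; norm_num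
  have e2 : (s ^ 2) ^ (-(3 / 2) : ℝ) = (s ^ 3)⁻¹ := by
    rw [← Real.rpow_natCast, ← Real.rpow_mul hs.le, ← Real.rpow_natCast,
      ← Real.rpow_neg hs.le]; norm_num
  have htri : ‖x‖ ≤ ‖x - (s ^ 2 / 2) • v‖ + s ^ 2 / 2 * ‖v‖ := by
    have h := norm_add_le (x - (s ^ 2 / 2) • v) ((s ^ 2 / 2) • v)
    rwa [sub_add_cancel, norm_smul, Real.norm_of_nonneg (by positivity)] at h
  rw [e1, e2]
  obtain ⟨V, hV⟩ : ∃ V, ‖v‖ = s * V := ⟨‖v‖ / s, by field_simp⟩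
  obtain ⟨X, hX⟩ : ∃ X, ‖x‖ = s ^ 3 * X := ⟨‖x‖ / s ^ 3, by field_simp⟩
  obtain ⟨Y, hY⟩ : ∃ Y, ‖x - (s ^ 2 / 2) • v‖ = s ^ 3 * Y :=
    ⟨‖x - (s ^ 2 / 2) • v‖ / s ^ 3, by field_simp⟩
  have hX0 : 0 ≤ X := nonneg_of_mul_nonneg_right (hX ▸ norm_nonneg x) (by positivity)
  rw [hX, hY, hV] at htri
  rw [hX, hY, hV]
  have hXYV : X ≤ Y + V / 2 := by
    refine le_of_mul_le_mul_left ?_ (pow_pos hs 3)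
    linarith
  set S : ℝ := V ^ 2 / 8 + 3 / 2 * Y ^ 2 with hS
  have hexp : Real.exp (-(s * V) ^ 2 / (4 * s ^ 2) - 3 * (s ^ 3 * Y) ^ 2 / (s ^ 2) ^ 3)
      = Real.exp (-S) * Real.exp (-S) := by
    rw [← Real.exp_add]
    congr 1
    rw [hS]
    field_simp
    ring
  have henv : Real.exp (-S) ≤ Real.exp (-(1 / 16 / (s ^ 2) ^ 3) * (s ^ 3 * X) ^ 2) *
      Real.exp (-(1 / 16 / (s ^ 2) ^ 1) * (s * V) ^ 2) := by
    rw [← Real.exp_add, Real.exp_le_exp]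
    have h : -(1 / 16 / (s ^ 2) ^ 3) * (s ^ 3 * X) ^ 2
        + -(1 / 16 / (s ^ 2) ^ 1) * (s * V) ^ 2 = -(X ^ 2 + V ^ 2) / 16 := by
      field_simp
      ring
    rw [h, hS]
    nlinarith [sq_nonneg (Y - V / 2), sq_nonneg Y, sq_nonneg V]
  have hS1 : (S + 1) * Real.exp (-S) ≤ 1 := by
    rw [Real.exp_neg, ← div_eq_mul_inv, div_le_one (Real.exp_pos _)]
    exact Real.add_one_le_exp S
  have key (L : ℝ) (hL : L ≤ 4 * (S + 1)) :
      L * (Real.exp (-S) * Real.exp (-S)) ≤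
        4 * (Real.exp (-(1 / 16 / (s ^ 2) ^ 3) * (s ^ 3 * X) ^ 2) *
          Real.exp (-(1 / 16 / (s ^ 2) ^ 1) * (s * V) ^ 2)) := by
    have h0 := Real.exp_pos (-S)
    have h1 : L * Real.exp (-S) ≤ 4 := by nlinarith
    rw [← mul_assoc]
    exact (mul_le_mul_of_nonneg_right h1 h0.le).trans (by gcongr)
  rw [hexp]
  constructor
  · have h := mul_le_mul_of_nonneg_left
      (key (V / 2 + 3 * Y) (by nlinarith [sq_nonneg (V - 2), sq_nonneg (Y - 1)]))
      (inv_pos.2 hs).le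
    have h' : s * V / (2 * s ^ 2) + 3 * (s ^ 3 * Y) / (s ^ 2) ^ 2
        = s⁻¹ * (V / 2 + 3 * Y) := by field_simp
    rw [h']
    linarith
  · have h := mul_le_mul_of_nonneg_left
      (key (6 * Y) (by nlinarith [sq_nonneg V, sq_nonneg (Y - 1)]))
      (inv_pos.2 (pow_pos hs 3)).le
    have h' : 6 * (s ^ 3 * Y) / (s ^ 2) ^ 3 = (s ^ 3)⁻¹ * (6 * Y) := by field_simp
    rw [h']
    linarith

/-- A bound for the derivative of `c exp (a ‖f‖² + b ‖g‖²)`. -/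
theorem norm_fderiv_const_mul_exp_le {E F : Type*} [NormedAddCommGroup E] [NormedSpace ℝ E]
    [NormedAddCommGroup F] [InnerProductSpace ℝ F] {c : ℝ} (hc : 0 ≤ c) (a b : ℝ)
    {f g : E → F} {f' g' : E →L[ℝ] F} {v : E} (hf : HasFDerivAt f f' v)
    (hg : HasFDerivAt g g' v) {k l : ℝ} (hk : ‖f'‖ ≤ k) (hl : ‖g'‖ ≤ l) :
    ‖fderiv ℝ (fun w => c * Real.exp (a * ‖f w‖ ^ 2 + b * ‖g w‖ ^ 2)) v‖
      ≤ c * ((|a| * (2 * (‖f v‖ * k)) + |b| * (2 * (‖g v‖ * l))) *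
        Real.exp (a * ‖f v‖ ^ 2 + b * ‖g v‖ ^ 2)) := by
  have hsq {h : E → F} {h' : E →L[ℝ] F} {m : ℝ} (hm : ‖h'‖ ≤ m) :
      ‖2 • (innerSL ℝ (h v)).comp h'‖ ≤ 2 * (‖h v‖ * m) := by
    refine (norm_nsmul_le).trans ?_
    have h1 := ContinuousLinearMap.opNorm_comp_le (innerSL ℝ (h v)) h'
    rw [innerSL_apply_norm] at h1
    push_cast
    gcongr
    exact h1.trans (by gcongr)
  have hd := ((((hf.norm_sq.const_mul a).add (hg.norm_sq.const_mul b)).exp).const_mul c).fderiv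
  refine (congrArg norm hd).le.trans ?_
  rw [norm_smul, norm_smul, Real.norm_of_nonneg hc, Real.norm_of_nonneg (Real.exp_pos _).le]
  refine mul_le_mul_of_nonneg_left ?_ hc
  rw [mul_comm]
  refine mul_le_mul_of_nonneg_right ?_ (Real.exp_pos _).le
  refine (norm_add_le _ _).trans ?_
  rw [norm_smul a, norm_smul b, Real.norm_eq_abs, Real.norm_eq_abs]
  exact add_le_add (mul_le_mul_of_nonneg_left (hsq hk) (abs_nonneg a))
    (mul_le_mul_of_nonneg_left (hsq hl) (abs_nonneg b))

theorem norm_fderiv_velocity_le {c t : ℝ} (hc : 0 ≤ c) (ht : 0 < t) (x v : E3) :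
    ‖fderiv ℝ (fun w : E3 => c *
      Real.exp (-‖w‖ ^ 2 / (4 * t) - 3 * ‖x - (t / 2) • w‖ ^ 2 / t ^ 3)) v‖
      ≤ c * ((‖v‖ / (2 * t) + 3 * ‖x - (t / 2) • v‖ / t ^ 2) *
        Real.exp (-‖v‖ ^ 2 / (4 * t) - 3 * ‖x - (t / 2) • v‖ ^ 2 / t ^ 3)) := by
  have hφ (w : E3) : -‖w‖ ^ 2 / (4 * t) - 3 * ‖x - (t / 2) • w‖ ^ 2 / t ^ 3
      = -(1 / (4 * t)) * ‖w‖ ^ 2 + -(3 / t ^ 3) * ‖x - (t / 2) • w‖ ^ 2 := by ring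
  have hl : ‖-((t / 2) • ContinuousLinearMap.id ℝ E3)‖ ≤ t / 2 := by
    rw [norm_neg, norm_smul, Real.norm_of_nonneg (by positivity)]
    exact mul_le_of_le_one_right (by positivity) ContinuousLinearMap.norm_id_le
  have h := norm_fderiv_const_mul_exp_le hc (-(1 / (4 * t))) (-(3 / t ^ 3))
    (hasFDerivAt_id (𝕜 := ℝ) v) (((hasFDerivAt_id (𝕜 := ℝ) v).const_smul (t / 2)).const_sub x)
    ContinuousLinearMap.norm_id_le hl
  simp only [id_eq, Pi.smul_apply] at h
  simp only [hφ]
  refine h.trans (le_of_eq ?_)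
  rw [abs_neg, abs_neg, abs_of_pos (by positivity), abs_of_pos (by positivity)]
  congr 2
  field_simp
  ring

theorem norm_fderiv_position_le {c t : ℝ} (hc : 0 ≤ c) (ht : 0 < t) (x v : E3) :
    ‖fderiv ℝ (fun y : E3 => c *
      Real.exp (-‖v‖ ^ 2 / (4 * t) - 3 * ‖y - (t / 2) • v‖ ^ 2 / t ^ 3)) x‖
      ≤ c * ((6 * ‖x - (t / 2) • v‖ / t ^ 3) *
        Real.exp (-‖v‖ ^ 2 / (4 * t) - 3 * ‖x - (t / 2) • v‖ ^ 2 / t ^ 3)) := by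
  have hφ (y : E3) : -‖v‖ ^ 2 / (4 * t) - 3 * ‖y - (t / 2) • v‖ ^ 2 / t ^ 3
      = -(1 / (4 * t)) * ‖v‖ ^ 2 + -(3 / t ^ 3) * ‖y - (t / 2) • v‖ ^ 2 := by ring
  have h := norm_fderiv_const_mul_exp_le hc (-(1 / (4 * t))) (-(3 / t ^ 3))
    (hasFDerivAt_const v x) ((hasFDerivAt_id (𝕜 := ℝ) x).sub_const ((t / 2) • v))
    (norm_zero (E := E3 →L[ℝ] E3)).le ContinuousLinearMap.norm_id_le
  simp only [id_eq] at h
  simp only [hφ]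
  refine h.trans (le_of_eq ?_)
  rw [abs_neg, abs_neg, abs_of_pos (by positivity), abs_of_pos (by positivity)]
  ring

/-- mixed `(p,1)`-norm bounds for `|x|^j ∇_v G` and `|x|^j ∇_x G`,
where `G` is the kinetic Fokker–Planck fundamental solution and the `(p,1)` norm is
the `L¹` norm in `v` followed by the `L^p` norm in `x`. -/
theorem kolmogorov_kernel_gradient_mixed_norms (C : ℝ) (hC : 0 < C)
    (G : E3 → E3 → ℝ → ℝ)
    (hG : ∀ (x v : E3) (t : ℝ), 0 < t →
      G x v t = C * t ^ (-(6 : ℝ)) *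
        Real.exp (-‖v‖ ^ 2 / (4 * t) - 3 * ‖x - (t / 2) • v‖ ^ 2 / t ^ 3)) :
    ∀ (p : ℝ≥0∞), 1 ≤ p → ∀ j : ℕ, ∃ Cp > 0, ∀ t ∈ Set.Ioc (0 : ℝ) 1,
      (eLpNorm (fun x : E3 => ∫ v : E3, ‖x‖ ^ j * ‖fderiv ℝ (fun w => G x w t) v‖) p volume
        ≤ ENNReal.ofReal (Cp * t ^ (if p = ⊤ then (3 * (j : ℝ) - 10) / 2
            else (-10 * p.toReal + 3 * (j : ℝ) * p.toReal + 9) / (2 * p.toReal)))) ∧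
      (eLpNorm (fun x : E3 => ∫ v : E3, ‖x‖ ^ j * ‖fderiv ℝ (fun y => G y v t) x‖) p volume
        ≤ ENNReal.ofReal (Cp * t ^ (if p = ⊤ then (3 * (j : ℝ) - 12) / 2
            else (-12 * p.toReal + 3 * (j : ℝ) * p.toReal + 9) / (2 * p.toReal)))) := by
  intro p hp j
  have hfactor {D E A s t : ℝ} (ht : 0 < t) (h : D ≤ 4 * t ^ s * E)
      (hA : A ≤ C * t ^ (-(6 : ℝ)) * D) :
      A ≤ 4 * C * t ^ (-6 + s) * E := by
    refine hA.trans ((mul_le_mul_of_nonneg_left h (by positivity)).trans (le_of_eq ?_))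
    rw [Real.rpow_add ht]
    ring
  have hv := exists_eLpNorm_integral_le_of_gaussian_envelope p hp j
    (show (0 : ℝ) < 4 * C by positivity) (-6 + -(1 / 2))
    (fun x v t => ‖fderiv ℝ (fun w => G x w t) v‖) (fun _ _ _ => norm_nonneg _)
    (fun x v t ht => by
      simp only [hG _ _ t ht]
      exact hfactor ht (kernel_exponent_envelope ht x v).1
        (norm_fderiv_velocity_le (by positivity) ht x v))
  have hx := exists_eLpNorm_integral_le_of_gaussian_envelope p hp j
    (show (0 : ℝ) < 4 * C by positivity) (-6 + -(3 / 2))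
    (fun x v t => ‖fderiv ℝ (fun y => G y v t) x‖) (fun _ _ _ => norm_nonneg _)
    (fun x v t ht => by
      simp only [hG _ _ t ht]
      exact hfactor ht (kernel_exponent_envelope ht x v).2
        (norm_fderiv_position_le (by positivity) ht x v))
  obtain ⟨K, hK, hKt⟩ := hv
  obtain ⟨L, hL, hLt⟩ := hx
  have hexponent (m : ℝ) : (if p = ⊤ then (3 * (j : ℝ) - m) / 2
      else (-m * p.toReal + 3 * (j : ℝ) * p.toReal + 9) / (2 * p.toReal))
      = (3 * (j : ℝ) - m) / 2 + 9 / 2 / p.toReal := by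
    split_ifs with h
    · simp [h]
    · have hr : 0 < p.toReal := ENNReal.toReal_pos (zero_lt_one.trans_le hp).ne' h
      field_simp
      ring
  refine ⟨max K L, lt_max_of_lt_left hK, fun t ht => ⟨?_, ?_⟩⟩
  · refine (hKt t ht.1).trans (ENNReal.ofReal_le_ofReal ?_)
    rw [hexponent 10, show (-6 + -(1 / 2) + 3 / 2 + 3 * (j : ℝ) / 2 : ℝ)
      = (3 * (j : ℝ) - 10) / 2 by ring]
    exact mul_le_mul_of_nonneg_right (le_max_left K L) (Real.rpow_nonneg ht.1.le _)
  · refine (hLt t ht.1).trans (ENNReal.ofReal_le_ofReal ?_)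
    rw [hexponent 12, show (-6 + -(3 / 2) + 3 / 2 + 3 * (j : ℝ) / 2 : ℝ)
      = (3 * (j : ℝ) - 12) / 2 by ring]
    exact mul_le_mul_of_nonneg_right (le_max_right K L) (Real.rpow_nonneg ht.1.le _)
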